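/- The running composite likelihood ratio test has Type I error at most a: if ν_{θ*} = inf{n ∈ ℕ : M_{α,β,n} > 1/a} denotes the stopping time of the sequential test, then sup_{θ*∈Θ_0} Pr_{θ*}(ν_{θ*} < ∞) ≤ a for every a ∈ (0,1). -/

import Mathlib

open MeasureTheory ENNReal
open scoped BigOperators Classical

noncomputable section

/-- Division in `ℝ≥0∞` with the convention that the ratio is `0` when the
denominator is `0`. -/
def safeDiv (a b : ℝ≥0∞) : ℝ≥0∞ := if b = 0 then 0 else a / b

variable {d : ℕ} {π : Fin d → Type*} [∀ i, MeasurableSpace (π i)]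

/-- The marginal density on the coordinates in `S`, obtained by integrating a density
out over the coordinates in `[d] \ S` (as a function of the full vector, depending only
on the coordinates in `S`). -/
def marginal (μ : ∀ i, Measure (π i)) (S : Finset (Fin d))
    (f : (∀ i, π i) → ℝ≥0∞) : (∀ i, π i) → ℝ≥0∞ :=
  MeasureTheory.lmarginal μ Sᶜ f

/-- The conditional density of the coordinates in `T1` given the coordinates in `T2`,
with the convention that the ratio is `0` when the denominator is `0`. -/
def condDens (μ : ∀ i, Measure (π i)) (T1 T2 : Finset (Fin d))
    (f : (∀ i, π i) → ℝ≥0∞) (x : ∀ i, π i) : ℝ≥0∞ :=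
  safeDiv (marginal μ (T1 ∪ T2) f x) (marginal μ T2 f x)

/-- `𝕊_d`: the nonempty subsets of `[d]`. -/
abbrev Sd (d : ℕ) := {S : Finset (Fin d) // S.Nonempty}

/-- `𝕋_d`: ordered pairs of disjoint nonempty subsets of `[d]`. -/
abbrev Td (d : ℕ) := {T : Finset (Fin d) × Finset (Fin d) //
  T.1.Nonempty ∧ T.2.Nonempty ∧ Disjoint T.1 T.2}

/-- The individual composite likelihood
`p_{α,β}(x;θ) = ∏_S p_S(x_S;θ)^(α_S/γ) ∏_T p(x_{T←}|x_{T→};θ)^(β_T/γ)`,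
where `f = p(·;θ)` is the joint density. -/
def compLik (μ : ∀ i, Measure (π i)) (α : Sd d → ℝ) (β : Td d → ℝ) (γ : ℝ)
    (f : (∀ i, π i) → ℝ≥0∞) (x : ∀ i, π i) : ℝ≥0∞ :=
  (∏ S : Sd d, marginal μ S.1 f x ^ (α S / γ)) *
  (∏ T : Td d, condDens μ T.1.1 T.1.2 f x ^ (β T / γ))

/-!
For densities `f` and `g`, a ratio of marginals satisfies `E_f[g_S / f_S] ≤ 1`. So does a ratio of
conditionals: it equals `(f_B / g_B) * (g_{A ∪ B} / f_{A ∪ B})`, so changing measure on the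
coordinates in `A ∪ B` bounds its expectation by `E_g[f_B / g_B] ≤ 1`. The weights `α_S / γ` and
`β_T / γ` sum to one, hence Hölder's inequality gives `E_f[compLik g / compLik f] ≤ 1`. Since
`θ̃_{i-1}` is independent of `X_i`, the running product of `compLik (p θ̃_{i-1}) / compLik (p θ*)`
at `X_i` is a nonnegative supermartingale started at `1`. It dominates the test statistic by the
maximality of `θ̂_n`, and Ville's inequality applies.
-/

open ProbabilityTheory

section Marginals

variable {μ : ∀ i, Measure (π i)} {f g h : (∀ i, π i) → ℝ≥0∞} {S A B : Finset (Fin d)}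

theorem lmarginal_mul_of_dependsOn {δ : Type*} [DecidableEq δ] {E : δ → Type*}
    [∀ i, MeasurableSpace (E i)] {μ : ∀ i, Measure (E i)} {s : Finset δ}
    {f h : (∀ i, E i) → ℝ≥0∞} (hf : Measurable f) (hh : DependsOn h (s : Set δ)ᶜ) :
    lmarginal μ s (h * f) = h * lmarginal μ s f := by
  ext x
  have h_const (y : ∀ i : s, E i) : h (Function.updateFinset x s y) = h x :=
    hh fun i hi => by simp_all [Function.updateFinset]
  simp only [lmarginal, Pi.mul_apply, h_const]
  exact lintegral_const_mul _ (hf.comp measurable_updateFinset)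

theorem marginal_mul_of_dependsOn (hf : Measurable f) (hh : DependsOn h (S : Set (Fin d))) :
    marginal μ S (h * f) = h * marginal μ S f :=
  lmarginal_mul_of_dependsOn hf (by simpa using hh)

theorem dependsOn_marginal : DependsOn (marginal μ S f) (S : Set (Fin d)) :=
  fun _ _ hxy => lmarginal_congr μ f fun i hi => hxy (i := i) (by simpa using hi)

theorem dependsOn_marginal_of_subset (hAB : A ⊆ B) :
    DependsOn (marginal μ A f) (B : Set (Fin d)) :=
  dependsOn_marginal.mono (Finset.coe_subset.2 hAB)

theorem measurable_safeDiv {Y : Type*} [MeasurableSpace Y] {u v : Y → ℝ≥0∞}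
    (hu : Measurable u) (hv : Measurable v) : Measurable fun y => safeDiv (u y) (v y) :=
  Measurable.ite (hv (measurableSet_singleton 0)) measurable_const (hu.div hv)

theorem safeDiv_le_div (u v : ℝ≥0∞) : safeDiv u v ≤ u / v := by
  unfold safeDiv
  split_ifs
  exacts [zero_le, le_rfl]

theorem safeDiv_eq_div {u v : ℝ≥0∞} (hv : v ≠ 0) : safeDiv u v = u / v :=
  if_neg hv

variable [∀ i, SigmaFinite (μ i)]

theorem measurable_marginal (hf : Measurable f) : Measurable (marginal μ S f) :=
  hf.lmarginal μ

theorem measurable_condDens (hf : Measurable f) : Measurable (condDens μ A B f) :=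
  measurable_safeDiv (measurable_marginal hf) (measurable_marginal hf)

theorem condDens_empty_right (hf1 : ∫⁻ x, f x ∂Measure.pi μ = 1) :
    condDens μ A ∅ f = marginal μ A f := by
  ext x
  have h_total : marginal μ ∅ f x = 1 := by simp [marginal, hf1]
  rw [condDens, h_total, safeDiv_eq_div one_ne_zero, Finset.union_empty, div_one]

theorem lintegral_withDensity_le_of_mul_marginal_le (hf : Measurable f) (hg : Measurable g)
    (hh : Measurable h) (hhS : DependsOn h (S : Set (Fin d)))
    (hle : h * marginal μ S f ≤ marginal μ S g) :
    ∫⁻ x, h x ∂(Measure.pi μ).withDensity f ≤ ∫⁻ x, g x ∂Measure.pi μ := by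
  rw [lintegral_withDensity_eq_lintegral_mul _ hf hh, mul_comm f h]
  refine lintegral_le_of_lmarginal_le Sᶜ (hh.mul hf) hg ?_
  rwa [← marginal_mul_of_dependsOn hf hhS] at hle

theorem lintegral_mul_marginal_div_marginal_le (hf : Measurable f) (hg : Measurable g)
    (hh : Measurable h) (hhS : DependsOn h (S : Set (Fin d))) :
    ∫⁻ x, h x * (marginal μ S g x / marginal μ S f x) ∂(Measure.pi μ).withDensity f
      ≤ ∫⁻ x, h x ∂(Measure.pi μ).withDensity g := by
  rw [lintegral_withDensity_eq_lintegral_mul _ hg hh, mul_comm g h]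
  refine lintegral_withDensity_le_of_mul_marginal_le (S := S) hf (hh.mul hg)
    (hh.mul ((measurable_marginal hg).div (measurable_marginal hf))) ?_ ?_
  · intro x y hxy
    simp only [hhS hxy, dependsOn_marginal hxy]
  · rw [marginal_mul_of_dependsOn hg hhS]
    intro x
    simp only [Pi.mul_apply, mul_assoc]
    gcongr
    exact ENNReal.mul_le_of_le_div le_rfl

theorem ae_marginal_ne_zero_and_ne_top (hf : Measurable f)
    (hf_fin : ∫⁻ x, f x ∂Measure.pi μ ≠ ∞) :
    ∀ᵐ x ∂(Measure.pi μ).withDensity f, marginal μ S f x ≠ 0 ∧ marginal μ S f x ≠ ∞ := by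
  -- `φ` is infinite exactly at the excluded values `0` and `∞`, yet `φ t * t ≤ t` for all `t`.
  let φ : ℝ≥0∞ → ℝ≥0∞ := Set.indicator {0, ∞} fun _ => ∞
  have hφ : Measurable φ :=
    measurable_const.indicator ((measurableSet_singleton ∞).insert 0)
  have hφ_mul_le (t : ℝ≥0∞) : φ t * t ≤ t := by
    by_cases ht0 : t = 0
    · simp [ht0]
    by_cases ht : t = ∞
    · simp [ht]
    simp [φ, ht0, ht]
  have h_meas : Measurable fun x => φ (marginal μ S f x) := hφ.comp (measurable_marginal hf)
  have h_int : ∫⁻ x, φ (marginal μ S f x) ∂(Measure.pi μ).withDensity f ≠ ∞ :=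
    ne_top_of_le_ne_top hf_fin <| lintegral_withDensity_le_of_mul_marginal_le hf hf h_meas
      (fun _ _ hxy => congrArg φ (dependsOn_marginal hxy)) fun _ => hφ_mul_le _
  filter_upwards [ae_lt_top h_meas h_int] with x hx
  constructor <;> intro h <;> simp [φ, h] at hx

theorem ae_condDens_ne_top (hf : Measurable f) (hf_fin : ∫⁻ x, f x ∂Measure.pi μ ≠ ∞) :
    ∀ᵐ x ∂(Measure.pi μ).withDensity f, condDens μ A B f x ≠ ∞ := by
  filter_upwards [ae_marginal_ne_zero_and_ne_top (S := A ∪ B) hf hf_fin,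
    ae_marginal_ne_zero_and_ne_top (S := B) hf hf_fin] with x hAB hB
  exact ne_top_of_le_ne_top (ENNReal.div_ne_top hAB.2 hB.1) (safeDiv_le_div _ _)

theorem lintegral_condDens_div_condDens_le (hf : Measurable f) (hg : Measurable g)
    (hf_fin : ∫⁻ x, f x ∂Measure.pi μ ≠ ∞) :
    ∫⁻ x, condDens μ A B g x / condDens μ A B f x ∂(Measure.pi μ).withDensity f
      ≤ ∫⁻ x, f x ∂Measure.pi μ := by
  have hfB : Measurable (marginal μ B f) := measurable_marginal hf
  have hgB : Measurable (marginal μ B g) := measurable_marginal hg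
  calc ∫⁻ x, condDens μ A B g x / condDens μ A B f x ∂(Measure.pi μ).withDensity f
      ≤ ∫⁻ x, marginal μ B f x / marginal μ B g x *
          (marginal μ (A ∪ B) g x / marginal μ (A ∪ B) f x) ∂(Measure.pi μ).withDensity f := by
        refine lintegral_mono_ae ?_
        filter_upwards [ae_marginal_ne_zero_and_ne_top (S := B) hf hf_fin] with x hx
        calc condDens μ A B g x / condDens μ A B f x
            ≤ marginal μ (A ∪ B) g x / marginal μ B g x /
                (marginal μ (A ∪ B) f x / marginal μ B f x) := by
              rw [condDens, condDens, safeDiv_eq_div hx.1]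
              gcongr
              exact safeDiv_le_div _ _
          _ = _ := by
              simp only [div_eq_mul_inv]
              rw [← div_eq_mul_inv (marginal μ (A ∪ B) f x),
                ENNReal.inv_div (.inl hx.2) (.inl hx.1), div_eq_mul_inv]
              ring
    _ ≤ ∫⁻ x, marginal μ B f x / marginal μ B g x ∂(Measure.pi μ).withDensity g := by
        refine lintegral_mul_marginal_div_marginal_le hf hg (hfB.div hgB) fun x y hxy => ?_
        have hB {u : (∀ i, π i) → ℝ≥0∞} : marginal μ B u x = marginal μ B u y :=
          dependsOn_marginal_of_subset Finset.subset_union_right hxy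
        rw [hB, hB]
    _ ≤ ∫⁻ x, f x ∂Measure.pi μ := by
        simpa using lintegral_mul_marginal_div_marginal_le (S := B) (h := 1) hg hf
          measurable_one fun _ _ _ => rfl

end Marginals

section CompositeLikelihood

theorem lintegral_prod_rpow_div_prod_rpow_le_one {ι E : Type*} [Fintype ι] [MeasurableSpace E]
    {P : Measure E} {u v : ι → E → ℝ≥0∞} {w : ι → ℝ}
    (hu : ∀ k, AEMeasurable (u k) P) (hv : ∀ k, AEMeasurable (v k) P)
    (hv_fin : ∀ k, ∀ᵐ x ∂P, v k x ≠ ∞) (hw : ∀ k, 0 ≤ w k) (hw_sum : ∑ k, w k = 1)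
    (huv : ∀ k, ∫⁻ x, u k x / v k x ∂P ≤ 1) :
    ∫⁻ x, (∏ k, u k x ^ w k) / ∏ k, v k x ^ w k ∂P ≤ 1 := by
  calc ∫⁻ x, (∏ k, u k x ^ w k) / ∏ k, v k x ^ w k ∂P
      = ∫⁻ x, ∏ k, (u k x / v k x) ^ w k ∂P := by
        refine lintegral_congr_ae ?_
        filter_upwards [ae_all_iff.2 hv_fin] with x hx
        simp only [ENNReal.div_rpow_of_nonneg _ _ (hw _)]
        exact (ENNReal.prod_div_distrib_of_ne_top fun k _ =>
          ENNReal.rpow_ne_top_of_nonneg (hw k) (hx k)).symm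
    _ ≤ ∏ k, (∫⁻ x, u k x / v k x ∂P) ^ w k :=
        ENNReal.lintegral_prod_norm_pow_le _ (fun k _ => (hu k).div (hv k)) hw_sum
          fun k _ => hw k
    _ ≤ 1 := Finset.prod_le_one' fun k _ => ENNReal.rpow_le_one (huv k) (hw k)

/-- The exponent `α_S / γ` or `β_T / γ` of a factor of the composite likelihood. -/
def factorWeight (α : Sd d → ℝ) (β : Td d → ℝ) (γ : ℝ) : Sd d ⊕ Td d → ℝ :=
  Sum.elim (fun S => α S / γ) fun T => β T / γ

/-- The pair `(T←, T→)` of a factor of the composite likelihood. The marginal density `p_S` is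
encoded as `(S, ∅)`, since it is the conditional density given no coordinates. -/
def factorPair : Sd d ⊕ Td d → Finset (Fin d) × Finset (Fin d) :=
  Sum.elim (fun S => (S.1, ∅)) Subtype.val

theorem factorWeight_nonneg {α : Sd d → ℝ} {β : Td d → ℝ} {γ : ℝ} (hα : ∀ S, 0 ≤ α S)
    (hβ : ∀ T, 0 ≤ β T) (hγ : 0 ≤ γ) (k : Sd d ⊕ Td d) : 0 ≤ factorWeight α β γ k := by
  cases k with
  | inl S => exact div_nonneg (hα S) hγ
  | inr T => exact div_nonneg (hβ T) hγ

theorem sum_factorWeight {α : Sd d → ℝ} {β : Td d → ℝ} {γ : ℝ}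
    (hγ : γ = ∑ S, α S + ∑ T, β T) (hγ0 : γ ≠ 0) : ∑ k, factorWeight α β γ k = 1 := by
  simp only [factorWeight, Fintype.sum_sum_type, Sum.elim_inl, Sum.elim_inr]
  rw [← Finset.sum_div, ← Finset.sum_div, ← add_div, ← hγ, div_self hγ0]

variable {μ : ∀ i, Measure (π i)} [∀ i, SigmaFinite (μ i)] {f g : (∀ i, π i) → ℝ≥0∞}
  {α : Sd d → ℝ} {β : Td d → ℝ} {γ : ℝ}

theorem compLik_eq_prod_condDens_rpow (hf1 : ∫⁻ x, f x ∂Measure.pi μ = 1) (x : ∀ i, π i) :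
    compLik μ α β γ f x =
      ∏ k, condDens μ (factorPair k).1 (factorPair k).2 f x ^ factorWeight α β γ k := by
  simp [compLik, factorPair, factorWeight, Fintype.prod_sum_type, condDens_empty_right hf1]

theorem ae_compLik_ne_top (hw : ∀ k, 0 ≤ factorWeight α β γ k) (hf : Measurable f)
    (hf1 : ∫⁻ x, f x ∂Measure.pi μ = 1) :
    ∀ᵐ x ∂(Measure.pi μ).withDensity f, compLik μ α β γ f x ≠ ∞ := by
  have h_fin : ∀ᵐ x ∂(Measure.pi μ).withDensity f, ∀ k : Sd d ⊕ Td d,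
      condDens μ (factorPair k).1 (factorPair k).2 f x ≠ ∞ :=
    ae_all_iff.2 fun _ => ae_condDens_ne_top hf (by simp [hf1])
  filter_upwards [h_fin] with x hx
  rw [compLik_eq_prod_condDens_rpow hf1]
  exact ENNReal.prod_ne_top fun k _ => ENNReal.rpow_ne_top_of_nonneg (hw k) (hx k)

theorem lintegral_compLik_div_compLik_le_one (hw : ∀ k, 0 ≤ factorWeight α β γ k)
    (hw_sum : ∑ k, factorWeight α β γ k = 1)
    (hf : Measurable f) (hf1 : ∫⁻ x, f x ∂Measure.pi μ = 1)
    (hg : Measurable g) (hg1 : ∫⁻ x, g x ∂Measure.pi μ = 1) :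
    ∫⁻ x, compLik μ α β γ g x / compLik μ α β γ f x ∂(Measure.pi μ).withDensity f ≤ 1 := by
  have hf_fin : ∫⁻ x, f x ∂Measure.pi μ ≠ ∞ := by simp [hf1]
  simp only [compLik_eq_prod_condDens_rpow hf1, compLik_eq_prod_condDens_rpow hg1]
  exact lintegral_prod_rpow_div_prod_rpow_le_one
    (fun _ => (measurable_condDens hg).aemeasurable)
    (fun _ => (measurable_condDens hf).aemeasurable)
    (fun _ => ae_condDens_ne_top hf hf_fin) hw hw_sum
    fun _ => (lintegral_condDens_div_condDens_le hf hg hf_fin).trans_eq hf1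

variable {Θ : Type*} [MeasurableSpace Θ] {p : Θ → (∀ i, π i) → ℝ≥0∞}

theorem measurable_marginal_uncurry (hp : Measurable (Function.uncurry p))
    (S : Finset (Fin d)) :
    Measurable fun z : Θ × (∀ i, π i) => marginal μ S (p z.1) z.2 := by
  refine Measurable.lintegral_prod_right (f := fun (z : Θ × (∀ i, π i)) y =>
    p z.1 (Function.updateFinset z.2 Sᶜ y)) ?_
  exact hp.comp (measurable_fst.fst.prodMk
    (measurable_updateFinset'.comp (measurable_fst.snd.prodMk measurable_snd)))

theorem measurable_compLik_uncurry (hp : Measurable (Function.uncurry p)) :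
    Measurable fun z : Θ × (∀ i, π i) => compLik μ α β γ (p z.1) z.2 := by
  have hS := measurable_marginal_uncurry (μ := μ) hp
  exact (Finset.measurable_fun_prod _ fun S _ => (hS _).pow_const _).mul
    (Finset.measurable_fun_prod _ fun T _ => (measurable_safeDiv (hS _) (hS _)).pow_const _)

end CompositeLikelihood

section Supermartingales

variable {Ω E T : Type*} {m mΩ : MeasurableSpace Ω} [MeasurableSpace E] [MeasurableSpace T]
  {P : Measure Ω}

/-- A nonnegative supermartingale with values in `ℝ≥0∞`. Mathlib's `Supermartingale` is real-valued
and integrable; here conditional expectations are replaced by integrals over past events, so that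
the value `∞` is allowed. -/
structure IsENNRealSupermartingale (M : ℕ → Ω → ℝ≥0∞) (F : Filtration ℕ mΩ) (P : Measure Ω) :
    Prop where
  measurable (n : ℕ) : Measurable[F n] (M n)
  setLIntegral_succ_le (n : ℕ) {s : Set Ω} (hs : MeasurableSet[F n] s) :
    ∫⁻ ω in s, M (n + 1) ω ∂P ≤ ∫⁻ ω in s, M n ω ∂P

theorem mul_measure_inter_add_setLIntegral_sdiff_le {f : Ω → ℝ≥0∞} (hf : Measurable f)
    (s : Set Ω) (c : ℝ≥0∞) :
    c * P (s ∩ {ω | c ≤ f ω}) + ∫⁻ ω in s \ {ω | c ≤ f ω}, f ω ∂P ≤ ∫⁻ ω in s, f ω ∂P := by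
  rw [← lintegral_inter_add_sdiff f s (measurableSet_le measurable_const hf), ← setLIntegral_const]
  exact add_le_add (setLIntegral_mono hf fun _ hω => hω.2) le_rfl

/-- Ville's inequality. -/
theorem IsENNRealSupermartingale.mul_measure_exists_le_le {M : ℕ → Ω → ℝ≥0∞}
    {F : Filtration ℕ mΩ} (hM : IsENNRealSupermartingale M F P) (c : ℝ≥0∞) :
    c * P {ω | ∃ n, c ≤ M n ω} ≤ ∫⁻ ω, M 0 ω ∂P := by
  let A : ℕ → Set Ω := Set.accumulate fun n => {ω | c ≤ M n ω}
  have hA (n : ℕ) : MeasurableSet[F n] (A n) :=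
    MeasurableSet.biUnion (Set.to_countable _) fun i hi =>
      F.mono hi _ (hM.measurable i measurableSet_Ici)
  have hM_meas (n : ℕ) : Measurable (M n) := (hM.measurable n).mono (F.le n) le_rfl
  have h_stopped (n : ℕ) : c * P (A n) + ∫⁻ ω in (A n)ᶜ, M n ω ∂P ≤ ∫⁻ ω, M 0 ω ∂P := by
    induction n with
    | zero =>
      simpa [A, Set.compl_eq_univ_sdiff] using
        mul_measure_inter_add_setLIntegral_sdiff_le (P := P) (hM_meas 0) Set.univ c
    | succ n ih =>
      let H : Set Ω := {ω | c ≤ M (n + 1) ω}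
      have hA_succ : A (n + 1) = A n ∪ (A n)ᶜ ∩ H := by
        rw [Set.union_inter_distrib_left, Set.union_compl_self, Set.univ_inter]
        exact Set.accumulate_succ _ n
      have hA_succ_compl : (A (n + 1))ᶜ = (A n)ᶜ \ H := by
        rw [hA_succ]; grind
      calc c * P (A (n + 1)) + ∫⁻ ω in (A (n + 1))ᶜ, M (n + 1) ω ∂P
          ≤ c * P (A n) + (c * P ((A n)ᶜ ∩ H) + ∫⁻ ω in (A n)ᶜ \ H, M (n + 1) ω ∂P) := by
            rw [← add_assoc, ← mul_add, hA_succ_compl, hA_succ]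
            gcongr
            exact measure_union_le _ _
        _ ≤ c * P (A n) + ∫⁻ ω in (A n)ᶜ, M (n + 1) ω ∂P := by
            gcongr
            exact mul_measure_inter_add_setLIntegral_sdiff_le (hM_meas (n + 1)) _ c
        _ ≤ c * P (A n) + ∫⁻ ω in (A n)ᶜ, M n ω ∂P :=
            add_le_add le_rfl (hM.setLIntegral_succ_le n (hA n).compl)
        _ ≤ ∫⁻ ω, M 0 ω ∂P := ih
  rw [Set.ofPred_exists, measure_iUnion_eq_iSup_accumulate, ENNReal.mul_iSup]
  exact iSup_le fun n => le_self_add.trans (h_stopped n)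

theorem lintegral_comp_prodMk_of_indepFun {Y : Ω → T} {X : Ω → E} [IsFiniteMeasure P]
    (hY : Measurable Y) (hX : Measurable X) (hYX : IndepFun Y X P) {φ : T × E → ℝ≥0∞}
    (hφ : Measurable φ) :
    ∫⁻ ω, φ (Y ω, X ω) ∂P = ∫⁻ ω, ∫⁻ x, φ (Y ω, x) ∂P.map X ∂P := by
  rw [← lintegral_map hφ (hY.prodMk hX),
    (indepFun_iff_map_prod_eq_prod_map_map hY.aemeasurable hX.aemeasurable).1 hYX,
    lintegral_prod _ hφ.aemeasurable, lintegral_map hφ.lintegral_prod_right' hY]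

theorem lintegral_mul_comp_le_of_indep [IsFiniteMeasure P] (hm : m ≤ mΩ)
    {U : Ω → ℝ≥0∞} (hU : Measurable[m] U) {V : Ω → T} (hV : Measurable[m] V)
    {X : Ω → E} (hX : Measurable X) (hmX : Indep m (MeasurableSpace.comap X inferInstance) P)
    {r : T × E → ℝ≥0∞} (hr : Measurable r) (hr_le : ∀ t, ∫⁻ x, r (t, x) ∂P.map X ≤ 1) :
    ∫⁻ ω, U ω * r (V ω, X ω) ∂P ≤ ∫⁻ ω, U ω ∂P := by
  have hUV : Measurable[m] fun ω => (U ω, V ω) := hU.prodMk hV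
  have h_indep : IndepFun (fun ω => (U ω, V ω)) X P := indep_of_indep_of_le_left hmX hUV.comap_le
  calc ∫⁻ ω, U ω * r (V ω, X ω) ∂P
      = ∫⁻ ω, ∫⁻ x, U ω * r (V ω, x) ∂P.map X ∂P :=
        lintegral_comp_prodMk_of_indepFun (hUV.mono hm le_rfl) hX h_indep
          (φ := fun q => q.1.1 * r (q.1.2, q.2))
          (measurable_fst.fst.mul (hr.comp (measurable_fst.snd.prodMk measurable_snd)))
    _ ≤ ∫⁻ ω, U ω ∂P := by
        refine lintegral_mono fun ω => ?_
        rw [lintegral_const_mul (U ω) (f := fun x => r (V ω, x))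
          (hr.comp measurable_prodMk_left)]
        exact mul_le_of_le_one_right' (hr_le _)

theorem isENNRealSupermartingale_prod_of_indep [IsFiniteMeasure P] {F : Filtration ℕ mΩ}
    {X : ℕ → Ω → E} (hX : ∀ n, Measurable[F (n + 1)] (X n))
    (hFX : ∀ n, Indep (F n) (MeasurableSpace.comap (X n) inferInstance) P)
    {V : ℕ → Ω → T} (hV : ∀ n, Measurable[F n] (V n)) {r : T × E → ℝ≥0∞} (hr : Measurable r)
    (hr_le : ∀ n t, ∫⁻ x, r (t, x) ∂P.map (X n) ≤ 1) :
    IsENNRealSupermartingale (fun n ω => ∏ i ∈ Finset.range n, r (V i ω, X i ω)) F P := by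
  have h_meas (n : ℕ) : Measurable[F n] fun ω => ∏ i ∈ Finset.range n, r (V i ω, X i ω) := by
    refine Finset.measurable_fun_prod _ fun i hi => hr.comp ?_
    have hin : i + 1 ≤ n := Finset.mem_range.1 hi
    exact ((hV i).mono (F.mono (i.le_succ.trans hin)) le_rfl).prodMk
      ((hX i).mono (F.mono hin) le_rfl)
  refine ⟨h_meas, fun n s hs => ?_⟩
  simp only [Finset.prod_range_succ]
  rw [← lintegral_indicator (F.le n _ hs), ← lintegral_indicator (F.le n _ hs)]
  simp only [Set.indicator_mul_left]
  exact lintegral_mul_comp_le_of_indep (F.le n) ((h_meas n).indicator hs) (hV n)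
    ((hX n).mono (F.le (n + 1)) le_rfl) (hFX n) hr (hr_le n)

end Supermartingales

section PastFiltration

variable {Ω E : Type*} {mΩ : MeasurableSpace Ω} [MeasurableSpace E] {X : ℕ → Ω → E}

theorem measurable_comap_restrict_of_lt {n j : ℕ} (hj : j < n) :
    Measurable[MeasurableSpace.comap (fun ω (k : Fin n) => X k ω) inferInstance] (X j) :=
  (measurable_pi_apply (⟨j, hj⟩ : Fin n)).comp (comap_measurable fun ω (k : Fin n) => X k ω)

/-- The natural filtration `F n = σ(X_0, …, X_{n-1})` of a sequence of random variables. The index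
is the number of observations, so `F 0` is trivial and `X n` is only `F (n + 1)`-measurable. -/
def pastFiltration (X : ℕ → Ω → E) (hX : ∀ n, Measurable (X n)) : Filtration ℕ mΩ where
  seq n := MeasurableSpace.comap (fun ω (j : Fin n) => X j ω) inferInstance
  mono' _ _ hmn := Measurable.comap_le <| @measurable_pi_lambda _ _ _ (_) _ _ fun j =>
    measurable_comap_restrict_of_lt (j.2.trans_le hmn)
  le' _ := Measurable.comap_le <| measurable_pi_lambda _ fun j => hX j

theorem measurable_pastFiltration_succ (hX : ∀ n, Measurable (X n)) (n : ℕ) :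
    Measurable[pastFiltration X hX (n + 1)] (X n) :=
  measurable_comap_restrict_of_lt n.lt_succ_self

theorem indep_pastFiltration {P : Measure Ω} (hX : ∀ n, Measurable (X n))
    (hX_indep : iIndepFun X P) (n : ℕ) :
    Indep (pastFiltration X hX n) (MeasurableSpace.comap (X n) inferInstance) P := by
  have h_indep := hX_indep.indepFun_finset (Finset.range n) {n} (by simp) hX
  have h_past : Measurable fun (v : Finset.range n → E) (j : Fin n) =>
      v ⟨j, Finset.mem_range.2 j.2⟩ :=
    measurable_pi_lambda _ fun _ => measurable_pi_apply _
  have h_next : Measurable fun v : ({n} : Finset ℕ) → E => v ⟨n, Finset.mem_singleton_self n⟩ :=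
    measurable_pi_apply _
  exact h_indep.comp h_past h_next

end PastFiltration

section RunningRatio

variable {μ : ∀ i, Measure (π i)} [∀ i, SigmaFinite (μ i)]
  {α : Sd d → ℝ} {β : Td d → ℝ} {γ : ℝ}
  {Ω : Type*} {mΩ : MeasurableSpace Ω} {P : Measure Ω} {X : ℕ → Ω → (∀ i, π i)}

theorem ae_forall_compLik_ne_top {f : (∀ i, π i) → ℝ≥0∞} (hf : Measurable f)
    (hf1 : ∫⁻ x, f x ∂Measure.pi μ = 1) (hw : ∀ k, 0 ≤ factorWeight α β γ k)
    (hX : ∀ n, Measurable (X n)) (hlaw : ∀ n, P.map (X n) = (Measure.pi μ).withDensity f) :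
    ∀ᵐ ω ∂P, ∀ n, compLik μ α β γ f (X n ω) ≠ ∞ := by
  refine ae_all_iff.2 fun n => ae_of_ae_map (p := fun x => compLik μ α β γ f x ≠ ∞)
    (hX n).aemeasurable ?_
  rw [hlaw]
  exact ae_compLik_ne_top hw hf hf1

variable {Θ : Type*} [MeasurableSpace Θ] {p : Θ → (∀ i, π i) → ℝ≥0∞}

theorem isENNRealSupermartingale_prod_compLik_div_compLik [IsFiniteMeasure P] {θstar : Θ}
    (hp_meas : Measurable (Function.uncurry p))
    (hp_prob : ∀ θ, ∫⁻ x, p θ x ∂Measure.pi μ = 1)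
    (hw : ∀ k, 0 ≤ factorWeight α β γ k) (hw_sum : ∑ k, factorWeight α β γ k = 1)
    (hlaw : ∀ n, P.map (X n) = (Measure.pi μ).withDensity (p θstar))
    {F : Filtration ℕ mΩ} (hX : ∀ n, Measurable[F (n + 1)] (X n))
    (hFX : ∀ n, Indep (F n) (MeasurableSpace.comap (X n) inferInstance) P)
    {θtilde : ℕ → Ω → Θ} (hθtilde : ∀ n, Measurable[F n] (θtilde n)) :
    IsENNRealSupermartingale (fun n ω => ∏ i ∈ Finset.range n,
      compLik μ α β γ (p (θtilde i ω)) (X i ω) / compLik μ α β γ (p θstar) (X i ω)) F P := by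
  have hp (θ : Θ) : Measurable (p θ) := hp_meas.comp measurable_prodMk_left
  have hL : Measurable fun z : Θ × (∀ i, π i) => compLik μ α β γ (p z.1) z.2 :=
    measurable_compLik_uncurry hp_meas
  have h_star : Measurable fun z : Θ × (∀ i, π i) => (θstar, z.2) :=
    measurable_const.prodMk measurable_snd
  have h_ratio : Measurable fun z : Θ × (∀ i, π i) =>
      compLik μ α β γ (p z.1) z.2 / compLik μ α β γ (p θstar) z.2 := hL.div (hL.comp h_star)
  have h_ratio_le (n : ℕ) (θ : Θ) :
      ∫⁻ x, compLik μ α β γ (p θ) x / compLik μ α β γ (p θstar) x ∂P.map (X n) ≤ 1 := by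
    rw [hlaw]
    exact lintegral_compLik_div_compLik_le_one hw hw_sum (hp θstar) (hp_prob θstar) (hp θ)
      (hp_prob θ)
  exact isENNRealSupermartingale_prod_of_indep hX hFX hθtilde h_ratio h_ratio_le

end RunningRatio

theorem running_CLRT_type_I_error_general
    (μ : ∀ i, Measure (π i)) [∀ i, SigmaFinite (μ i)]
    {Θ : Type*} [MeasurableSpace Θ] (p : Θ → (∀ i, π i) → ℝ≥0∞)
    (hp_meas : Measurable (Function.uncurry p))
    (hp_prob : ∀ θ : Θ, ∫⁻ x, p θ x ∂(Measure.pi μ) = 1)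
    (α : Sd d → ℝ) (β : Td d → ℝ) (hα : ∀ S, 0 ≤ α S) (hβ : ∀ T, 0 ≤ β T)
    (γ : ℝ) (hγ : γ = ∑ S, α S + ∑ T, β T) (hγpos : 0 < γ)
    {Ω : Type*} {mΩ : MeasurableSpace Ω} (Pr : Measure Ω) [IsProbabilityMeasure Pr]
    (θstar : Θ) (X : ℕ → Ω → (∀ i, π i))
    (hlaw : ∀ i, Measure.map (X i) Pr = (Measure.pi μ).withDensity (p θstar))
    (F : Filtration ℕ mΩ) (hX : ∀ i, Measurable[F (i + 1)] (X i))
    (hFX : ∀ i, Indep (F i) (MeasurableSpace.comap (X i) inferInstance) Pr)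
    (θtilde : ℕ → Ω → Θ) (hθtilde : ∀ i, Measurable[F i] (θtilde i))
    (θhat : ℕ → Ω → Θ)
    (hθhat : ∀ n ω, (∏ i ∈ Finset.range n, compLik μ α β γ (p θstar) (X i ω))
        ≤ ∏ i ∈ Finset.range n, compLik μ α β γ (p (θhat n ω)) (X i ω))
    (a : ℝ) (ha0 : 0 < a) :
    Pr {ω | ∃ n : ℕ, 0 < n ∧ 1 / ENNReal.ofReal a < safeDiv
        (∏ i ∈ Finset.range n, compLik μ α β γ (p (θtilde i ω)) (X i ω))
        (∏ i ∈ Finset.range n, compLik μ α β γ (p (θhat n ω)) (X i ω))}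
      ≤ ENNReal.ofReal a := by
  have hw := factorWeight_nonneg hα hβ hγpos.le
  let M (n : ℕ) (ω : Ω) : ℝ≥0∞ := ∏ i ∈ Finset.range n,
    compLik μ α β γ (p (θtilde i ω)) (X i ω) / compLik μ α β γ (p θstar) (X i ω)
  have hM : IsENNRealSupermartingale M F Pr :=
    isENNRealSupermartingale_prod_compLik_div_compLik hp_meas hp_prob hw
      (sum_factorWeight hγ hγpos.ne') hlaw hX hFX hθtilde
  have h_ville : Pr {ω | ∃ n, 1 / ENNReal.ofReal a ≤ M n ω} ≤ ENNReal.ofReal a := by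
    simpa [M, ENNReal.inv_mul_le_iff, ha0] using
      hM.mul_measure_exists_le_le (1 / ENNReal.ofReal a)
  refine (measure_mono_ae ?_).trans h_ville
  filter_upwards [ae_forall_compLik_ne_top (hp_meas.comp measurable_prodMk_left) (hp_prob θstar) hw
    (fun n => (hX n).mono (F.le (n + 1)) le_rfl) hlaw] with ω hω
  rintro ⟨n, -, hn⟩
  refine ⟨n, hn.le.trans ?_⟩
  calc safeDiv (∏ i ∈ Finset.range n, compLik μ α β γ (p (θtilde i ω)) (X i ω))
        (∏ i ∈ Finset.range n, compLik μ α β γ (p (θhat n ω)) (X i ω))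
      ≤ (∏ i ∈ Finset.range n, compLik μ α β γ (p (θtilde i ω)) (X i ω)) /
          ∏ i ∈ Finset.range n, compLik μ α β γ (p θstar) (X i ω) :=
        (safeDiv_le_div _ _).trans (ENNReal.div_le_div_left (hθhat n ω) _)
    _ = M n ω := (ENNReal.prod_div_distrib_of_ne_top fun i _ => hω i).symm

/-- The running composite likelihood ratio test has Type I error at
most `a`: if `ν_{θ*} = inf{n ∈ ℕ : M_{α,β,n} > 1/a}` is the stopping time of the
sequential test, then `sup_{θ*∈Θ₀} Pr_{θ*}(ν_{θ*} < ∞) ≤ a` for every `a ∈ (0,1)`.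
(Here `{ν_{θ*} < ∞} = {∃ n ≥ 1 : M_{α,β,n} > 1/a}`, and the running statistic is
`M_{α,β,n} = ∏_{i=1}^n p_{α,β}(X_i;θ̃_{i-1}) / ∏_{i=1}^n p_{α,β}(X_i;θ̂_n)`.) -/
theorem running_CLRT_type_I_error
    {d : ℕ} (hd : 1 ≤ d)
    {π : Fin d → Type*} [∀ i, MeasurableSpace (π i)]
    (μ : ∀ i, Measure (π i)) [∀ i, SigmaFinite (μ i)]
    {Θ : Type*} [MeasurableSpace Θ]
    (p : Θ → (∀ i, π i) → ℝ≥0∞)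
    (hp_meas : Measurable (Function.uncurry p))
    (hp_prob : ∀ θ : Θ, ∫⁻ x, p θ x ∂(Measure.pi μ) = 1)
    (α : Sd d → ℝ) (β : Td d → ℝ)
    (hα : ∀ S, 0 ≤ α S) (hβ : ∀ T, 0 ≤ β T)
    (γ : ℝ) (hγ : γ = ∑ S, α S + ∑ T, β T) (hγpos : 0 < γ)
    {Ω : Type*} [MeasurableSpace Ω]
    (Pr : Measure Ω) [IsProbabilityMeasure Pr]
    (θstar : Θ)
    -- `X 0, X 1, X 2, …` is the i.i.d. sequence `X_1, X_2, …` (0-indexed),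
    -- each observation having density `p(·;θ*)` with respect to `μ`
    (X : ℕ → Ω → (∀ i, π i))
    (hX : ∀ i, Measurable (X i))
    (hiid : ProbabilityTheory.iIndepFun X Pr)
    (hlaw : ∀ i, Measure.map (X i) Pr = (Measure.pi μ).withDensity (p θstar))
    -- the natural filtration `F n = σ(X_1,…,X_n)` (so `F 0` is trivial)
    (F : ℕ → MeasurableSpace Ω)
    (hF : ∀ n, F n = MeasurableSpace.comap (fun ω => fun j : Fin n => X j ω)
      (inferInstance : MeasurableSpace (Fin n → ∀ i, π i)))
    -- non-anticipating estimators: `θtilde i` is the estimator `θ̃_i`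
    -- built from `X_1,…,X_i`, i.e. measurable with respect to `F i`
    (θtilde : ℕ → Ω → Θ)
    (hθtilde : ∀ i, @Measurable Ω Θ (F i) _ (θtilde i))
    -- null hypothesis parameter space and maximum composite likelihood
    -- estimators over `Θ₀`: `θhat n` is `F n`-measurable, `Θ₀`-valued and
    -- maximizes the composite likelihood of the first `n` observations over `Θ₀`
    (Θ0 : Set Θ)
    (θhat : ℕ → Ω → Θ)
    (hθhat_meas : ∀ n, @Measurable Ω Θ (F n) _ (θhat n))
    (hθhat_mem : ∀ n ω, θhat n ω ∈ Θ0)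
    (hθhat_max : ∀ n ω, ∀ θ ∈ Θ0,
      (∏ i ∈ Finset.range n, compLik μ α β γ (p θ) (X i ω))
        ≤ ∏ i ∈ Finset.range n, compLik μ α β γ (p (θhat n ω)) (X i ω))
    -- the DGP parameter lies in the null hypothesis set
    (hθstar : θstar ∈ Θ0)
    (a : ℝ) (ha0 : 0 < a) (ha1 : a < 1) :
    Pr {ω | ∃ n : ℕ, 0 < n ∧ 1 / ENNReal.ofReal a < safeDiv
        (∏ i ∈ Finset.range n, compLik μ α β γ (p (θtilde i ω)) (X i ω))
        (∏ i ∈ Finset.range n, compLik μ α β γ (p (θhat n ω)) (X i ω))}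
      ≤ ENNReal.ofReal a := by
  obtain rfl : F = pastFiltration X hX := funext hF
  exact running_CLRT_type_I_error_general μ p hp_meas hp_prob α β hα hβ γ hγ hγpos Pr θstar X hlaw
    (pastFiltration X hX) (measurable_pastFiltration_succ hX) (indep_pastFiltration hX hiid)
    θtilde hθtilde θhat (fun n ω => hθhat_max n ω θstar hθstar) a ha0
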